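/- Let p ∈ (5/2, 3), T > 0, and Ω ⊆ ℝ³ either the whole space, a half-space, or a bounded C^{1,1} domain. Then there is a constant c such that for all u, v in X = P⊥W^{2,p}(𝕋;L^p(Ω)) ∩ P⊥W^{1,p}(𝕋;W^{2,p}(Ω)), ‖∇v · ∂ₜ∇u‖_{L^p(𝕋×Ω)} ≤ c‖v‖_X‖u‖_X. -/

import Mathlib

noncomputable section

open MeasureTheory ENNReal

abbrev E3 := EuclideanSpace ℝ (Fin 3)

/-- Spatial partial derivative `∂ᵢ f`. -/
def Dx (f : E3 → ℝ) (i : Fin 3) (x : E3) : ℝ :=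
  fderiv ℝ f x (EuclideanSpace.single i 1)

/-- Spatial second derivative `∂ⱼ∂ᵢ f`. -/
def DDx (f : E3 → ℝ) (i j : Fin 3) (x : E3) : ℝ :=
  fderiv ℝ (fun y => Dx f i y) x (EuclideanSpace.single j 1)

/-- Time derivative `∂ₜ u`. -/
def dt (u : ℝ → E3 → ℝ) : ℝ → E3 → ℝ := fun t x => deriv (fun s => u s x) t

/-- The measure on one period `[0,T) × Ω` of the time-space cylinder `𝕋 × Ω`. -/
def μT (T : ℝ) (Ω : Set E3) : Measure (ℝ × E3) :=
  (volume.restrict (Set.Ioc (0 : ℝ) T)).prod (volume.restrict Ω)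

/-- (An equivalent version of) the norm of the solution space
`X = P⊥W^{2,p}(𝕋;L^p(Ω)) ∩ P⊥W^{1,p}(𝕋;W^{2,p}(Ω))`: the sum of the `L^p` norms of
`∂ₜ²u` and of `∂ₜᵃ∂ₓᵅu` for `a ≤ 1`, `|α| ≤ 2`, computed in `ℝ≥0∞`. -/
def XnormE (p : ℝ≥0∞) (μ : Measure (ℝ × E3)) (u : ℝ → E3 → ℝ) : ℝ≥0∞ :=
  eLpNorm (fun z : ℝ × E3 => dt (dt u) z.1 z.2) p μ
  + eLpNorm (fun z : ℝ × E3 => u z.1 z.2) p μ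
  + ∑ i : Fin 3, eLpNorm (fun z : ℝ × E3 => Dx (u z.1) i z.2) p μ
  + ∑ i : Fin 3, ∑ j : Fin 3, eLpNorm (fun z : ℝ × E3 => DDx (u z.1) i j z.2) p μ
  + eLpNorm (fun z : ℝ × E3 => dt u z.1 z.2) p μ
  + ∑ i : Fin 3, eLpNorm (fun z : ℝ × E3 => dt (fun s y => Dx (u s) i y) z.1 z.2) p μ
  + ∑ i : Fin 3, ∑ j : Fin 3,
      eLpNorm (fun z : ℝ × E3 => dt (fun s y => DDx (u s) i j y) z.1 z.2) p μ

/-- A bounded domain with `C^{1,1}` boundary. -/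
def IsC11Domain (Ω : Set E3) : Prop :=
  IsOpen Ω ∧ IsConnected Ω ∧ Bornology.IsBounded Ω ∧
  ∀ x ∈ frontier Ω, ∃ (e : E3 ≃ₗᵢ[ℝ] E3) (ω : ℝ × ℝ → ℝ) (r : ℝ), 0 < r ∧
    ContDiff ℝ 1 ω ∧ (∃ K, LipschitzWith K (fderiv ℝ ω)) ∧
    Metric.ball x r ∩ Ω = {y ∈ Metric.ball x r | ω (e y 0, e y 1) < e y 2}


/-- weighted Hölder -/
lemma wHolder {α : Type*} [MeasurableSpace α] (μ : Measure α) (p : ℝ) (hp : 1 < p)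
    (k g : α → ℝ≥0∞) (hk : AEMeasurable k μ) (hg : AEMeasurable g μ) :
    (∫⁻ a, k a * g a ∂μ) ^ p ≤ (∫⁻ a, k a ^ (p / (p - 1)) ∂μ) ^ (p - 1) * ∫⁻ a, g a ^ p ∂μ := by
  have hpq : p.HolderConjugate (p / (p - 1)) := .conjExponent hp
  have h := ENNReal.lintegral_mul_le_Lp_mul_Lq μ hpq.symm hk hg
  have hp0 : 0 < p := by linarith
  have hp1 : p - 1 ≠ 0 := by linarith
  calc (∫⁻ a, k a * g a ∂μ) ^ p ≤ _ := ENNReal.rpow_le_rpow h hp0.le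
    _ = _ := by
      rw [ENNReal.mul_rpow_of_nonneg _ _ hp0.le, ← ENNReal.rpow_mul, ← ENNReal.rpow_mul]
      congr 2
      · field_simp
      · rw [one_div_mul_cancel hp0.ne', ENNReal.rpow_one]

lemma jensen {α : Type*} [MeasurableSpace α] (μ : Measure α) (p : ℝ) (hp : 1 < p)
    (g : α → ℝ≥0∞) (hg : AEMeasurable g μ) :
    (∫⁻ a, g a ∂μ) ^ p ≤ (μ Set.univ) ^ (p - 1) * ∫⁻ a, g a ^ p ∂μ := by
  simpa using wHolder μ p hp (fun _ => 1) g aemeasurable_const hg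

lemma lint_smul (τ : ℝ) (hτ : 0 < τ) (g : E3 → ℝ≥0∞) (hg : Measurable g) (x : E3) :
    ∫⁻ h, g (x + τ • h) = ENNReal.ofReal ((τ ^ 3)⁻¹) * ∫⁻ y, g y := by
  have h1 := Measure.map_addHaar_smul (volume : Measure E3) hτ.ne'
  have h2 : ∫⁻ h, g (x + τ • h) = ∫⁻ h, g (x + h) ∂(Measure.map (τ • ·) (volume : Measure E3)) := by
    rw [lintegral_map (by fun_prop) (by fun_prop)]
  rw [h2, h1, lintegral_smul_measure, lintegral_add_left_eq_self]
  simp [abs_of_pos hτ]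

lemma avg_bound (p : ℝ) (hp : 1 < p) (B : Set E3) (g : E3 → ℝ≥0∞) (hg : Measurable g)
    (τ : ℝ) (hτ : 0 < τ) :
    ∫⁻ x, (∫⁻ h in B, g (x + τ • h)) ^ (2 * p) ≤
      (volume B) ^ (2 * p - 1) * ENNReal.ofReal ((τ ^ 3)⁻¹) * (∫⁻ y, g y ^ p) ^ 2 := by
  set N := ∫⁻ y, g y ^ p with hN
  set b := volume B with hb
  set J : E3 → ℝ≥0∞ := fun x => ∫⁻ h in B, g (x + τ • h) ^ p with hJ
  have hJm : Measurable J := by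
    apply Measurable.lintegral_prod_right'
      (f := fun z : E3 × E3 => g (z.1 + τ • z.2) ^ p)
    fun_prop
  have hJ1 : ∀ x, J x ≤ ENNReal.ofReal ((τ ^ 3)⁻¹) * N := fun x => by
    rw [hN, ← lint_smul τ hτ (fun y => g y ^ p) (by fun_prop) x]
    exact setLIntegral_le_lintegral _ _
  have hJ2 : ∫⁻ x, J x = b * N := by
    simp only [hJ]
    rw [lintegral_lintegral_swap (by fun_prop)]
    have : ∀ h : E3, ∫⁻ x, g (x + τ • h) ^ p = N := fun h => by
      rw [lintegral_add_right_eq_self (fun y => g y ^ p)]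
    simp [this, hb, mul_comm]
  have hA : ∀ x, (∫⁻ h in B, g (x + τ • h)) ^ (2 * p) ≤
      b ^ (2 * (p - 1)) * (ENNReal.ofReal ((τ ^ 3)⁻¹) * N) * J x := fun x => by
    have h := jensen (volume.restrict B) p hp (fun h => g (x + τ • h)) (by fun_prop)
    rw [Measure.restrict_apply_univ] at h
    rw [mul_comm 2 p, ENNReal.rpow_mul]
    calc _ ≤ (b ^ (p - 1) * J x) ^ (2 : ℝ) := ENNReal.rpow_le_rpow h (by norm_num)
      _ = b ^ (2 * (p - 1)) * (J x * J x) := by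
        rw [ENNReal.mul_rpow_of_nonneg _ _ (by norm_num), ← ENNReal.rpow_mul, mul_comm 2,
          ENNReal.rpow_two, sq]
      _ ≤ _ := by
        rw [mul_assoc]
        gcongr
        exact hJ1 x
  calc _ ≤ ∫⁻ x, b ^ (2 * (p - 1)) * (ENNReal.ofReal ((τ ^ 3)⁻¹) * N) * J x := lintegral_mono hA
    _ = b ^ (2 * (p - 1)) * (ENNReal.ofReal ((τ ^ 3)⁻¹) * N) * (b * N) := by
      rw [lintegral_const_mul _ hJm, hJ2]
    _ = (b ^ (2 * (p - 1)) * b ^ (1 : ℝ)) * ENNReal.ofReal ((τ ^ 3)⁻¹) * N ^ 2 := by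
      rw [ENNReal.rpow_one]; ring
    _ = _ := by
      rw [← ENNReal.rpow_add_of_nonneg _ _ (by linarith) (by norm_num)]
      congr 3; ring

/-- upper gradient pair -/
def UG (F G : E3 → ℝ≥0∞) : Prop :=
  ∀ x h : E3, F x ≤ F (x + h) + ‖h‖ₑ * ∫⁻ τ in Set.Ioo (0 : ℝ) 1, G (x + τ • h)

lemma rpow_int_fin (a : ℝ) (ha : -1 < a) :
    ∫⁻ τ in Set.Ioo (0 : ℝ) 1, ENNReal.ofReal (τ ^ a) ≠ ⊤ := by
  have h := (intervalIntegral.integrableOn_Ioo_rpow_iff (s := a) one_pos).2 ha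
  have := h.lintegral_lt_top
  exact this.ne

lemma tau_bound (p : ℝ) (hp : 5 / 2 < p) (B : Set E3) (hB : volume B ≠ ⊤) :
    ∃ C : ℝ≥0∞, C ≠ ⊤ ∧ ∀ g : E3 → ℝ≥0∞, Measurable g →
    ∫⁻ x, (∫⁻ τ in Set.Ioo (0 : ℝ) 1, ∫⁻ h in B, g (x + τ • h)) ^ (2 * p) ≤
      C * (∫⁻ y, g y ^ p) ^ 2 := by
  set K : ℝ≥0∞ := (∫⁻ τ in Set.Ioo (0 : ℝ) 1,
    (ENNReal.ofReal (τ ^ (-(1/2) : ℝ))) ^ (2 * p / (2 * p - 1))) ^ (2 * p - 1) with hK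
  set K2 : ℝ≥0∞ := ∫⁻ τ in Set.Ioo (0 : ℝ) 1, ENNReal.ofReal (τ ^ (p - 3)) with hK2
  have hKt : K ≠ ⊤ := by
    refine ENNReal.rpow_ne_top_of_nonneg (by linarith) ?_
    convert rpow_int_fin (-(1/2) * (2 * p / (2 * p - 1))) ?_ using 1
    · refine setLIntegral_congr_fun measurableSet_Ioo fun τ hτ => ?_
      have h0 : 0 < τ := hτ.1
      rw [ENNReal.ofReal_rpow_of_pos (by positivity), ← Real.rpow_mul h0.le]
    · have : 2 * p / (2 * p - 1) < 2 := by
        rw [div_lt_iff₀ (by linarith)]; linarith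
      linarith
  have hK2t : K2 ≠ ⊤ := rpow_int_fin _ (by linarith)
  refine ⟨K * ((volume B) ^ (2 * p - 1) * K2), ?_, fun g hg => ?_⟩
  · refine ENNReal.mul_ne_top hKt (ENNReal.mul_ne_top ?_ hK2t)
    exact ENNReal.rpow_ne_top_of_nonneg (by linarith) hB
  set A : E3 → ℝ → ℝ≥0∞ := fun x τ => ∫⁻ h in B, g (x + τ • h) with hA
  have hAm : Measurable (Function.uncurry A) := by
    apply Measurable.lintegral_prod_right'
      (f := fun z : (E3 × ℝ) × E3 => g (z.1.1 + z.1.2 • z.2))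
    fun_prop
  have hAm' : ∀ x, Measurable (A x) := fun x => hAm.comp measurable_prodMk_left
  have hAm'' : ∀ τ, Measurable (fun x => A x τ) := fun x => hAm.comp measurable_prodMk_right
  have h1 : ∀ x, (∫⁻ τ in Set.Ioo (0 : ℝ) 1, A x τ) ^ (2 * p) ≤
      K * ∫⁻ τ in Set.Ioo (0 : ℝ) 1, ENNReal.ofReal (τ ^ p) * A x τ ^ (2 * p) := fun x => by
    have h := wHolder (volume.restrict (Set.Ioo (0 : ℝ) 1)) (2 * p) (by linarith)
      (fun τ => ENNReal.ofReal (τ ^ (-(1/2) : ℝ)))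
      (fun τ => ENNReal.ofReal (τ ^ ((1/2) : ℝ)) * A x τ)
      (by fun_prop) (by have := hAm' x; fun_prop)
    convert h using 2
    · refine setLIntegral_congr_fun measurableSet_Ioo fun τ hτ => ?_
      have h0 : 0 < τ := hτ.1
      rw [← mul_assoc, ← ENNReal.ofReal_mul (by positivity), ← Real.rpow_add h0]
      simp
    · refine setLIntegral_congr_fun measurableSet_Ioo fun τ hτ => ?_
      have h0 : 0 < τ := hτ.1
      rw [ENNReal.mul_rpow_of_nonneg _ _ (by linarith), ENNReal.ofReal_rpow_of_pos (by positivity),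
        ← Real.rpow_mul h0.le]
      congr 3; ring
  calc _ ≤ ∫⁻ x, K * ∫⁻ τ in Set.Ioo (0 : ℝ) 1, ENNReal.ofReal (τ ^ p) * A x τ ^ (2 * p) :=
        lintegral_mono h1
    _ = K * ∫⁻ τ in Set.Ioo (0 : ℝ) 1, ENNReal.ofReal (τ ^ p) * ∫⁻ x, A x τ ^ (2 * p) := by
        rw [lintegral_const_mul' _ _ hKt, lintegral_lintegral_swap]
        · congr 1
          refine lintegral_congr fun τ => ?_
          rw [lintegral_const_mul' _ _ ENNReal.ofReal_ne_top]
        · apply Measurable.aemeasurable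
          have : Measurable fun z : E3 × ℝ => A z.1 z.2 := hAm
          exact Measurable.mul (by fun_prop) (this.pow_const _)
    _ ≤ K * ∫⁻ τ in Set.Ioo (0 : ℝ) 1, ((volume B) ^ (2 * p - 1) * (∫⁻ y, g y ^ p) ^ 2) *
          ENNReal.ofReal (τ ^ (p - 3)) := by
        gcongr K * ?_
        refine setLIntegral_mono (by fun_prop) fun τ hτ => ?_
        have h0 : 0 < τ := hτ.1
        calc _ ≤ ENNReal.ofReal (τ ^ p) * ((volume B) ^ (2 * p - 1) * ENNReal.ofReal ((τ ^ 3)⁻¹) *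
                (∫⁻ y, g y ^ p) ^ 2) := by
              gcongr
              exact avg_bound p (by linarith) B g hg τ h0
          _ = ((volume B) ^ (2 * p - 1) * (∫⁻ y, g y ^ p) ^ 2) *
              (ENNReal.ofReal (τ ^ p) * ENNReal.ofReal ((τ ^ 3)⁻¹)) := by ring
          _ = _ := by
              rw [← ENNReal.ofReal_mul (by positivity), Real.rpow_sub h0, div_eq_mul_inv]
              norm_cast
    _ = _ := by
        rw [lintegral_const_mul _ (by fun_prop)]
        ring

lemma local_sob (p : ℝ) (hp : 5 / 2 < p) (S Ω : Set E3) (hS : MeasurableSet S)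
    (hΩ : MeasurableSet Ω) (a : E3) (ρ : ℝ) (hρ : 0 < ρ)
    (hc : ∀ x ∈ S, ∀ h ∈ Metric.ball a ρ, ∀ τ : ℝ, 0 < τ → τ ≤ 1 → x + τ • h ∈ Ω) :
    ∃ C : ℝ≥0∞, C ≠ ⊤ ∧ ∀ F G : E3 → ℝ≥0∞, Measurable F → Measurable G → UG F G →
      ∫⁻ x in S, F x ^ (2 * p) ≤ C * (∫⁻ x in Ω, F x ^ p + G x ^ p) ^ 2 := by
  set B := Metric.ball a ρ with hB
  have hBt : volume B ≠ ⊤ := measure_ball_lt_top.ne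
  have hB0 : volume B ≠ 0 := (Metric.measure_ball_pos _ _ hρ).ne'
  set b := volume B with hb
  set R : ℝ≥0∞ := ENNReal.ofReal (‖a‖ + ρ) with hR
  obtain ⟨C2, hC2, hD⟩ := tau_bound p hp B hBt
  have hp0 : 0 ≤ 2 * p := by linarith
  have hp00 : 0 < p := by linarith
  refine ⟨(b ^ (2 * p))⁻¹ * (2 ^ (2 * p - 1) * (b ^ (2 * p - 1) + R ^ (2 * p) * C2)), ?_, ?_⟩
  · refine ENNReal.mul_ne_top ?_ (ENNReal.mul_ne_top ?_ (ENNReal.add_ne_top.2 ⟨?_, ENNReal.mul_ne_top ?_ hC2⟩))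
    · exact ENNReal.inv_ne_top.2 (by simp [ENNReal.rpow_eq_zero_iff, hB0, hBt])
    · exact ENNReal.rpow_ne_top_of_nonneg (by linarith) (by simp)
    · exact ENNReal.rpow_ne_top_of_nonneg (by linarith) hBt
    · exact ENNReal.rpow_ne_top_of_nonneg (by linarith) (by simp [hR])
  intro F G hF hG hUG
  set f := Ω.indicator F with hf
  set g := Ω.indicator G with hg
  have hfm : Measurable f := hF.indicator hΩ
  have hgm : Measurable g := hG.indicator hΩ
  set A : E3 → ℝ≥0∞ := fun x => ∫⁻ h in B, f (x + (1 : ℝ) • h) with hA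
  set D : E3 → ℝ≥0∞ := fun x => ∫⁻ τ in Set.Ioo (0 : ℝ) 1, ∫⁻ h in B, g (x + τ • h) with hDd
  have hind : ∀ H : E3 → ℝ≥0∞, ∫⁻ y, (Ω.indicator H y) ^ p = ∫⁻ y in Ω, H y ^ p := fun H => by
    rw [← lintegral_indicator hΩ]
    refine lintegral_congr fun y => ?_
    by_cases h : y ∈ Ω <;> simp [h, hp00]
  have hAm : Measurable A := by
    apply Measurable.lintegral_prod_right'
      (f := fun z : E3 × E3 => f (z.1 + (1 : ℝ) • z.2))
    fun_prop
  have hpt : ∀ x ∈ S, b * F x ≤ A x + R * D x := fun x hx => by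
    calc b * F x = ∫⁻ h in B, F x := by simp [hb, mul_comm]
      _ ≤ ∫⁻ h in B, (f (x + (1 : ℝ) • h) + R * ∫⁻ τ in Set.Ioo (0 : ℝ) 1, g (x + τ • h)) := by
        refine setLIntegral_mono' measurableSet_ball fun h hh => ?_
        refine (hUG x h).trans ?_
        have h1 : ‖h‖ₑ ≤ R := by
          rw [← ofReal_norm]
          apply ENNReal.ofReal_le_ofReal
          have := norm_sub_norm_le h a
          have h2 : ‖h - a‖ < ρ := by
            rw [hB] at hh
            simpa [dist_eq_norm] using hh
          linarith
        have h2 : F (x + h) = f (x + (1 : ℝ) • h) := by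
          have := hc x hx h hh 1 one_pos le_rfl
          rw [hf, Set.indicator_of_mem this, one_smul]
        rw [h2]
        refine add_le_add le_rfl (mul_le_mul' h1 (le_of_eq ?_))
        refine setLIntegral_congr_fun measurableSet_Ioo fun τ hτ => ?_
        rw [hg, Set.indicator_of_mem (hc x hx h hh τ hτ.1 hτ.2.le)]
      _ = A x + R * D x := by
        rw [lintegral_add_left (by fun_prop), lintegral_const_mul' _ _ (by simp [hR]),
          lintegral_lintegral_swap (by fun_prop)]
  have hpt2 : ∀ x ∈ S, F x ^ (2 * p) ≤ (b ^ (2 * p))⁻¹ *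
      (2 ^ (2 * p - 1) * (A x ^ (2 * p) + R ^ (2 * p) * D x ^ (2 * p))) := fun x hx => by
    have h1 : b ^ (2 * p) * F x ^ (2 * p) ≤
        2 ^ (2 * p - 1) * (A x ^ (2 * p) + R ^ (2 * p) * D x ^ (2 * p)) := by
      rw [← ENNReal.mul_rpow_of_nonneg _ _ hp0, ← ENNReal.mul_rpow_of_nonneg _ _ hp0]
      refine (ENNReal.rpow_le_rpow (hpt x hx) hp0).trans ?_
      exact ENNReal.rpow_add_le_mul_rpow_add_rpow _ _ (by linarith)
    calc F x ^ (2 * p) = (b ^ (2 * p))⁻¹ * (b ^ (2 * p) * F x ^ (2 * p)) := by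
          rw [← mul_assoc, ENNReal.inv_mul_cancel, one_mul]
          · simp [ENNReal.rpow_eq_zero_iff, hB0, hBt]
          · exact ENNReal.rpow_ne_top_of_nonneg hp0 hBt
      _ ≤ _ := by gcongr
  have hbinv : (b ^ (2 * p))⁻¹ ≠ ⊤ :=
    ENNReal.inv_ne_top.2 (by simp [ENNReal.rpow_eq_zero_iff, hB0, hBt])
  have h2t : (2 : ℝ≥0∞) ^ (2 * p - 1) ≠ ⊤ := ENNReal.rpow_ne_top_of_nonneg (by linarith) (by simp)
  have hRt : R ^ (2 * p) ≠ ⊤ := ENNReal.rpow_ne_top_of_nonneg (by linarith) (by simp [hR])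
  have hI1 : ∫⁻ y in Ω, F y ^ p ≤ ∫⁻ x in Ω, F x ^ p + G x ^ p :=
    lintegral_mono fun x => le_self_add
  have hI2 : ∫⁻ y in Ω, G y ^ p ≤ ∫⁻ x in Ω, F x ^ p + G x ^ p :=
    lintegral_mono fun x => le_add_self
  have hAA : ∫⁻ x, A x ^ (2 * p) ≤ b ^ (2 * p - 1) * (∫⁻ x in Ω, F x ^ p + G x ^ p) ^ 2 := by
    refine (avg_bound p (by linarith) B f hfm 1 one_pos).trans ?_
    rw [hind]
    simp only [one_pow, inv_one, ENNReal.ofReal_one, mul_one]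
    gcongr
  have hDD : ∫⁻ x, D x ^ (2 * p) ≤ C2 * (∫⁻ x in Ω, F x ^ p + G x ^ p) ^ 2 := by
    refine (hD g hgm).trans ?_
    rw [hind]
    gcongr
  calc _ ≤ ∫⁻ x in S, (b ^ (2 * p))⁻¹ *
      (2 ^ (2 * p - 1) * (A x ^ (2 * p) + R ^ (2 * p) * D x ^ (2 * p))) :=
        setLIntegral_mono' hS hpt2
    _ ≤ ∫⁻ x, (b ^ (2 * p))⁻¹ *
      (2 ^ (2 * p - 1) * (A x ^ (2 * p) + R ^ (2 * p) * D x ^ (2 * p))) :=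
        setLIntegral_le_lintegral _ _
    _ = (b ^ (2 * p))⁻¹ * (2 ^ (2 * p - 1) * ((∫⁻ x, A x ^ (2 * p)) +
          R ^ (2 * p) * ∫⁻ x, D x ^ (2 * p))) := by
        rw [lintegral_const_mul' _ _ hbinv, lintegral_const_mul' _ _ h2t,
          lintegral_add_left (by fun_prop), lintegral_const_mul' _ _ hRt]
    _ ≤ (b ^ (2 * p))⁻¹ * (2 ^ (2 * p - 1) * (b ^ (2 * p - 1) * (∫⁻ x in Ω, F x ^ p + G x ^ p) ^ 2 +
          R ^ (2 * p) * (C2 * (∫⁻ x in Ω, F x ^ p + G x ^ p) ^ 2))) := by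
        gcongr
    _ = _ := by ring

/-- Uniform subcritical Sobolev inequality. -/
def Sob (p : ℝ) (Ω : Set E3) : Prop :=
  ∃ C : ℝ≥0∞, C ≠ ⊤ ∧ ∀ F G : E3 → ℝ≥0∞, Measurable F → Measurable G → UG F G →
      ∫⁻ x in Ω, F x ^ (2 * p) ≤ C * (∫⁻ x in Ω, F x ^ p + G x ^ p) ^ 2

lemma frontier_cone (Ω : Set E3) (x : E3)
    (h : ∃ (e : E3 ≃ₗᵢ[ℝ] E3) (ω : ℝ × ℝ → ℝ) (r : ℝ), 0 < r ∧
    ContDiff ℝ 1 ω ∧ (∃ K, LipschitzWith K (fderiv ℝ ω)) ∧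
    Metric.ball x r ∩ Ω = {y ∈ Metric.ball x r | ω (e y 0, e y 1) < e y 2}) :
    ∃ (ε : ℝ) (a : E3) (ρ : ℝ), 0 < ε ∧ 0 < ρ ∧
      ∀ y ∈ Metric.ball x ε ∩ Ω, ∀ h ∈ Metric.ball a ρ, ∀ τ : ℝ, 0 < τ → τ ≤ 1 → y + τ • h ∈ Ω := by
  obtain ⟨e, ω, r, hr, hω, -, heq⟩ := h
  set P : E3 → ℝ × ℝ := fun y => (e y 0, e y 1) with hP
  have hPc : Continuous P := by
    have := e.continuous
    fun_prop
  obtain ⟨L, s, hs, hL⟩ := (hω.contDiffAt (x := P x)).exists_lipschitzOnWith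
  obtain ⟨r1, hr1, hs1⟩ := Metric.mem_nhds_iff.1 (hPc.continuousAt.preimage_mem_nhds hs)
  set m := min r r1 with hm
  have hm0 : 0 < m := lt_min hr hr1
  set δ := m / 4 with hδ
  have hδ0 : 0 < δ := by positivity
  set ρ := δ / (1 + L) with hρ
  have hL0 : (0 : ℝ) ≤ L := L.2
  have hρ0 : 0 < ρ := by positivity
  have hρδ : ρ + L * ρ = δ := by rw [hρ]; field_simp
  set a : E3 := e.symm (EuclideanSpace.single 2 δ) with ha
  refine ⟨m / 2, a, ρ, by positivity, hρ0, fun y hy h hh τ hτ0 hτ1 => ?_⟩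
  have han : ‖a‖ = δ := by
    rw [ha, LinearIsometryEquiv.norm_map, PiLp.norm_single, Real.norm_of_nonneg hδ0.le]
  have hk : ‖h - a‖ < ρ := by simpa [dist_eq_norm] using hh
  have hLρ : 0 ≤ L * ρ := by positivity
  have hhn : ‖h‖ < 2 * δ := by
    have := norm_sub_norm_le h a
    linarith
  have hyx : ‖y - x‖ < m / 2 := by simpa [dist_eq_norm] using hy.1
  have hz : y + τ • h ∈ Metric.ball x m := by
    rw [Metric.mem_ball, dist_eq_norm]
    calc ‖y + τ • h - x‖ = ‖(y - x) + τ • h‖ := by congr 1; abel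
      _ ≤ ‖y - x‖ + τ * ‖h‖ := by
        refine (norm_add_le _ _).trans ?_
        rw [norm_smul, Real.norm_of_nonneg hτ0.le]
      _ < m := by nlinarith [norm_nonneg h]
  have hym : y ∈ Metric.ball x m := Metric.ball_subset_ball (by linarith) hy.1
  have hcoord : ∀ i, |e h i - e a i| ≤ ρ := fun i => by
    have h1 : e h i - e a i = (e (h - a)) i := by simp
    rw [h1]
    have := PiLp.norm_apply_le (e (h - a)) i
    rw [LinearIsometryEquiv.norm_map] at this
    exact this.trans hk.le
  have hea : e a = EuclideanSpace.single 2 δ := by simp [ha]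
  have h0 := hcoord 0
  have h1 := hcoord 1
  have h2 := hcoord 2
  rw [hea] at h0 h1 h2
  simp at h0 h1 h2
  have hlip := hL.dist_le_mul _ (hs1 (Metric.ball_subset_ball (min_le_right _ _) hz)) _
    (hs1 (Metric.ball_subset_ball (min_le_right _ _) hym))
  have hPd : dist (P (y + τ • h)) (P y) ≤ τ * ρ := by
    rw [Prod.dist_eq]
    simp only [hP, map_add, map_smul, PiLp.add_apply, PiLp.smul_apply, smul_eq_mul, Real.dist_eq,
      add_sub_cancel_left, abs_mul, abs_of_pos hτ0]
    exact max_le (by gcongr) (by gcongr)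
  have hyΩ : y ∈ {y ∈ Metric.ball x r | ω (e y 0, e y 1) < e y 2} := by
    rw [← heq]
    exact ⟨Metric.ball_subset_ball (min_le_left _ _) hym, hy.2⟩
  have hfin : y + τ • h ∈ {y ∈ Metric.ball x r | ω (e y 0, e y 1) < e y 2} := by
    refine ⟨Metric.ball_subset_ball (min_le_left _ _) hz, ?_⟩
    have h3 : ω (P (y + τ • h)) ≤ ω (P y) + L * (τ * ρ) := by
      have := (abs_le.1 (hlip.trans (mul_le_mul_of_nonneg_left hPd hL0))).2
      linarith
    have h4 : ω (P y) < e y 2 := hyΩ.2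
    have h5 : (e (y + τ • h)) 2 = e y 2 + τ * e h 2 := by simp
    show ω (P (y + τ • h)) < _
    rw [h5]
    have h6 := (abs_le.1 h2).1
    nlinarith
  rw [← heq] at hfin
  exact hfin.2

lemma sob_of_dom (p : ℝ) (hp : 5 / 2 < p) (Ω : Set E3)
    (hΩ : Ω = Set.univ ∨ Ω = {x : E3 | 0 < x 2} ∨ IsC11Domain Ω) : Sob p Ω := by
  rcases hΩ with rfl | rfl | ⟨ho, -, hbd, hfr⟩
  · exact local_sob p hp _ _ MeasurableSet.univ MeasurableSet.univ 0 1 one_pos (by simp)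
  · have hm : MeasurableSet {x : E3 | 0 < x 2} := by
      refine (isOpen_lt continuous_const ?_).measurableSet
      fun_prop
    refine local_sob p hp _ _ hm hm (EuclideanSpace.single 2 1) 1 one_pos ?_
    intro x hx h hh τ h0 h1
    have hx' : 0 < x 2 := hx
    have := PiLp.norm_apply_le (h - EuclideanSpace.single 2 1) 2
    have h3 : ‖h - EuclideanSpace.single 2 1‖ < 1 := by simpa [dist_eq_norm] using hh
    have h4 : |h 2 - 1| < 1 := by simpa using this.trans_lt h3
    have h5 := (abs_lt.1 h4).1
    have : 0 < τ * h 2 := mul_pos h0 (by linarith)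
    simp
    linarith
  · have hcone : ∀ x ∈ closure Ω, ∃ (ε : ℝ) (a : E3) (ρ : ℝ), 0 < ε ∧ 0 < ρ ∧
      ∀ y ∈ Metric.ball x ε ∩ Ω, ∀ h ∈ Metric.ball a ρ, ∀ τ : ℝ, 0 < τ → τ ≤ 1 →
        y + τ • h ∈ Ω := by
      intro x hx
      by_cases hxΩ : x ∈ Ω
      · obtain ⟨ε, hε, hb⟩ := Metric.isOpen_iff.1 ho x hxΩ
        refine ⟨ε / 2, 0, ε / 2, by positivity, by positivity, fun y hy h hh τ h0 h1 => hb ?_⟩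
        have hyx : ‖y - x‖ < ε / 2 := by simpa [dist_eq_norm] using hy.1
        have hhn : ‖h‖ < ε / 2 := by simpa using hh
        rw [Metric.mem_ball, dist_eq_norm]
        calc ‖y + τ • h - x‖ = ‖(y - x) + τ • h‖ := by congr 1; abel
          _ ≤ ‖y - x‖ + τ * ‖h‖ := by
            refine (norm_add_le _ _).trans ?_
            rw [norm_smul, Real.norm_of_nonneg h0.le]
          _ < ε := by nlinarith [norm_nonneg h]
      · exact frontier_cone Ω x (hfr x (by rw [ho.frontier_eq]; exact ⟨hx, hxΩ⟩))
    choose! ε a ρ hε hρ hc using hcone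
    have hcomp : IsCompact (closure Ω) := hbd.isCompact_closure
    obtain ⟨t, ht, hcov⟩ := hcomp.elim_nhds_subcover (fun x => Metric.ball x (ε x))
      (fun x hx => Metric.ball_mem_nhds x (hε x hx))
    have hloc : ∀ x : E3, ∃ C : ℝ≥0∞, C ≠ ⊤ ∧ (x ∈ t → ∀ F G : E3 → ℝ≥0∞, Measurable F →
        Measurable G → UG F G →
        ∫⁻ x in Metric.ball x (ε x) ∩ Ω, F x ^ (2 * p) ≤
          C * (∫⁻ x in Ω, F x ^ p + G x ^ p) ^ 2) := by
      intro x
      by_cases hx : x ∈ t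
      · obtain ⟨C, h1, h2⟩ := local_sob p hp (Metric.ball x (ε x) ∩ Ω) Ω
          (measurableSet_ball.inter ho.measurableSet) ho.measurableSet (a x) (ρ x)
          (hρ x (ht x hx)) (hc x (ht x hx))
        exact ⟨C, h1, fun _ => h2⟩
      · exact ⟨0, by simp, fun h => absurd h hx⟩
    choose C hC hCI using hloc
    refine ⟨∑ x ∈ t, C x, by simp [ENNReal.sum_eq_top, hC], fun F G hF hG hUG => ?_⟩
    have hsub : Ω ⊆ ⋃ x : t, (Metric.ball (x : E3) (ε x) ∩ Ω) := fun y hy => by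
      obtain ⟨x, hx, hyx⟩ := Set.mem_iUnion₂.1 (hcov (subset_closure hy))
      exact Set.mem_iUnion.2 ⟨⟨x, hx⟩, hyx, hy⟩
    calc _ ≤ ∫⁻ x in ⋃ x : t, (Metric.ball (x : E3) (ε x) ∩ Ω), F x ^ (2 * p) :=
          lintegral_mono_set hsub
      _ ≤ ∑' x : t, ∫⁻ y in (Metric.ball (x : E3) (ε x) ∩ Ω), F y ^ (2 * p) :=
          lintegral_iUnion_le _ _
      _ ≤ ∑' x : t, C x * (∫⁻ x in Ω, F x ^ p + G x ^ p) ^ 2 :=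
          ENNReal.tsum_le_tsum fun x => hCI x x.2 F G hF hG hUG
      _ = _ := by
          rw [tsum_fintype, Finset.sum_mul]
          exact Finset.sum_coe_sort t (fun x => C x * (∫⁻ x in Ω, F x ^ p + G x ^ p) ^ 2)

/-- joint smoothness -/
abbrev Sm (w : ℝ → E3 → ℝ) : Prop := ContDiff ℝ (⊤ : ℕ∞) (Function.uncurry w)

lemma Dx_eq (w : ℝ → E3 → ℝ) (hw : Sm w) (s : ℝ) (x : E3) (i : Fin 3) :
    Dx (w s) i x = fderiv ℝ (Function.uncurry w) (s, x) (0, EuclideanSpace.single i 1) := by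
  have h1 : HasFDerivAt (Function.uncurry w) _ (s, x) :=
    (hw.differentiable (by simp) (s, x)).hasFDerivAt
  have h2 := h1.comp x (hasFDerivAt_prodMk_right s x)
  have h3 : (Function.uncurry w) ∘ (fun y => (s, y)) = w s := rfl
  rw [h3] at h2
  rw [Dx, h2.fderiv]
  simp

lemma hasDerivAt_t (w : ℝ → E3 → ℝ) (hw : Sm w) (s : ℝ) (x : E3) :
    HasDerivAt (fun s => w s x) (fderiv ℝ (Function.uncurry w) (s, x) (1, 0)) s := by
  have h1 : HasFDerivAt (Function.uncurry w) _ (s, x) :=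
    (hw.differentiable (by simp) (s, x)).hasFDerivAt
  have h2 := (h1.comp s (hasFDerivAt_prodMk_left s x)).hasDerivAt
  have h3 : (Function.uncurry w) ∘ (fun y => (y, x)) = fun s => w s x := rfl
  rw [h3] at h2
  simpa using h2

lemma dt_eq (w : ℝ → E3 → ℝ) (hw : Sm w) (s : ℝ) (x : E3) :
    dt w s x = fderiv ℝ (Function.uncurry w) (s, x) (1, 0) := (hasDerivAt_t w hw s x).deriv

lemma Sm_fd (w : ℝ → E3 → ℝ) (hw : Sm w) (v : ℝ × E3) :
    ContDiff ℝ (⊤ : ℕ∞) (fun q => fderiv ℝ (Function.uncurry w) q v) :=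
  (hw.fderiv_right (m := (⊤ : ℕ∞)) (by simp)).clm_apply contDiff_const

lemma unc_Dx (w : ℝ → E3 → ℝ) (hw : Sm w) (i : Fin 3) :
    Function.uncurry (fun s y => Dx (w s) i y) =
      fun q => fderiv ℝ (Function.uncurry w) q (0, EuclideanSpace.single i 1) := by
  funext q
  exact Dx_eq w hw q.1 q.2 i

lemma unc_dt (w : ℝ → E3 → ℝ) (hw : Sm w) :
    Function.uncurry (dt w) = fun q => fderiv ℝ (Function.uncurry w) q (1, 0) := by
  funext q
  exact dt_eq w hw q.1 q.2

lemma Sm_Dx (w : ℝ → E3 → ℝ) (hw : Sm w) (i : Fin 3) : Sm (fun s y => Dx (w s) i y) := by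
  rw [Sm, unc_Dx w hw]; exact Sm_fd w hw _

lemma Sm_dt (w : ℝ → E3 → ℝ) (hw : Sm w) : Sm (dt w) := by
  rw [Sm, unc_dt w hw]; exact Sm_fd w hw _

lemma fd_fd (w : ℝ → E3 → ℝ) (hw : Sm w) (v v' q : ℝ × E3) :
    fderiv ℝ (fun q => fderiv ℝ (Function.uncurry w) q v) q v' =
      fderiv ℝ (fderiv ℝ (Function.uncurry w)) q v' v := by
  have h := ((hw.fderiv_right (m := (⊤ : ℕ∞)) (by simp)).differentiable (by simp) q)
  rw [fderiv_clm_apply h (by fun_prop)]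
  simp

lemma Dx_dt (w : ℝ → E3 → ℝ) (hw : Sm w) (s : ℝ) (x : E3) (j : Fin 3) :
    Dx (dt w s) j x = dt (fun s y => Dx (w s) j y) s x := by
  rw [Dx_eq _ (Sm_dt w hw), dt_eq _ (Sm_Dx w hw j), unc_Dx w hw, unc_dt w hw, fd_fd w hw,
    fd_fd w hw]
  exact (hw.contDiffAt.isSymmSndFDerivAt (by simp; exact WithTop.coe_le_coe.2 (le_top : (2 : ℕ∞) ≤ ⊤))) _ _

lemma Sm_slice (w : ℝ → E3 → ℝ) (hw : Sm w) (s : ℝ) : ContDiff ℝ (⊤ : ℕ∞) (w s) :=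
  hw.comp (contDiff_const.prodMk contDiff_id)

lemma Sm_meas (w : ℝ → E3 → ℝ) (hw : Sm w) : Measurable (fun q : ℝ × E3 => ‖w q.1 q.2‖ₑ) :=
  (show Continuous (fun q : ℝ × E3 => w q.1 q.2) from hw.continuous).measurable.enorm

lemma UG_smooth (f : E3 → ℝ) (hf : ContDiff ℝ (⊤ : ℕ∞) f) :
    UG (fun x => ‖f x‖ₑ) (fun x => ∑ j : Fin 3, ‖Dx f j x‖ₑ) := by
  intro x h
  have hd : ∀ τ : ℝ, HasDerivAt (fun τ : ℝ => f (x + τ • h)) (fderiv ℝ f (x + τ • h) h) τ := by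
    intro τ
    have h1 : HasFDerivAt f _ (x + τ • h) := (hf.differentiable (by simp) (x + τ • h)).hasFDerivAt
    have h2 : HasDerivAt (fun τ : ℝ => x + τ • h) h τ := by
      simpa using ((hasDerivAt_id τ).smul_const h).const_add x
    exact h1.comp_hasDerivAt τ h2
  have hcont : Continuous (fun τ : ℝ => fderiv ℝ f (x + τ • h) h) := by
    have := hf.continuous_fderiv (by simp)
    fun_prop
  have hI := intervalIntegral.integral_eq_sub_of_hasDerivAt (a := 0) (b := 1)
    (fun τ _ => hd τ) (hcont.intervalIntegrable _ _)
  rw [intervalIntegral.integral_of_le zero_le_one, integral_Ioc_eq_integral_Ioo] at hI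
  simp only [one_smul, zero_smul, add_zero] at hI
  have hfx : f x = f (x + h) - ∫ τ in Set.Ioo (0 : ℝ) 1, fderiv ℝ f (x + τ • h) h := by
    rw [hI]; ring
  have hpt : ∀ y, ‖fderiv ℝ f y h‖ₑ ≤ ‖h‖ₑ * ∑ j : Fin 3, ‖Dx f j y‖ₑ := fun y => by
    have hh : h = ∑ j : Fin 3, h j • (EuclideanSpace.single j 1 : E3) := by
      ext k
      fin_cases k <;> simp [Fin.sum_univ_three]
    have : fderiv ℝ f y h = ∑ j : Fin 3, h j * Dx f j y := by
      conv_lhs => rw [hh]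
      simp [Dx, map_sum]
    rw [this, Finset.mul_sum]
    refine (enorm_sum_le _ _).trans (Finset.sum_le_sum fun j _ => ?_)
    rw [enorm_mul]
    gcongr
    rw [enorm_le_iff_norm_le]
    exact PiLp.norm_apply_le h j
  calc ‖f x‖ₑ = ‖f (x + h) - ∫ τ in Set.Ioo (0 : ℝ) 1, fderiv ℝ f (x + τ • h) h‖ₑ := by rw [← hfx]
    _ ≤ ‖f (x + h)‖ₑ + ‖∫ τ in Set.Ioo (0 : ℝ) 1, fderiv ℝ f (x + τ • h) h‖ₑ := enorm_sub_le
    _ ≤ ‖f (x + h)‖ₑ + ∫⁻ τ in Set.Ioo (0 : ℝ) 1, ‖fderiv ℝ f (x + τ • h) h‖ₑ := by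
      gcongr; exact enorm_integral_le_lintegral_enorm _
    _ ≤ ‖f (x + h)‖ₑ + ∫⁻ τ in Set.Ioo (0 : ℝ) 1, ‖h‖ₑ * ∑ j : Fin 3, ‖Dx f j (x + τ • h)‖ₑ := by
      gcongr; exact hpt _
    _ = _ := by rw [lintegral_const_mul' _ _ (by simp)]

lemma UG.add {F G F' G' : E3 → ℝ≥0∞} (h : UG F G) (h' : UG F' G') (hG : Measurable G) :
    UG (fun x => F x + F' x) (fun x => G x + G' x) := by
  intro x k
  rw [lintegral_add_left (by fun_prop)]
  refine (add_le_add (h x k) (h' x k)).trans (le_of_eq ?_)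
  ring

lemma UG.const_mul {F G : E3 → ℝ≥0∞} (h : UG F G) (c : ℝ≥0∞) (hc : c ≠ ⊤) :
    UG (fun x => c * F x) (fun x => c * G x) := by
  intro x k
  rw [lintegral_const_mul' _ _ hc]
  refine (mul_le_mul' le_rfl (h x k)).trans (le_of_eq ?_)
  ring

lemma UG_int (μ : Measure ℝ) [SFinite μ] (φ γ : ℝ → E3 → ℝ≥0∞)
    (hφ : Measurable (Function.uncurry φ)) (hγ : Measurable (Function.uncurry γ))
    (h : ∀ s, UG (φ s) (γ s)) :
    UG (fun x => ∫⁻ s, φ s x ∂μ) (fun x => ∫⁻ s, γ s x ∂μ) := by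
  intro x k
  have hφ' : Measurable (fun q : ℝ × E3 => φ q.1 q.2) := hφ
  have hγ' : Measurable (fun q : ℝ × E3 => γ q.1 q.2) := hγ
  calc _ ≤ ∫⁻ s, (φ s (x + k) + ‖k‖ₑ * ∫⁻ τ in Set.Ioo (0 : ℝ) 1, γ s (x + τ • k)) ∂μ :=
        lintegral_mono fun s => h s x k
    _ = _ := by
        have hm : Measurable (fun s => φ s (x + k)) :=
          hφ'.comp (by fun_prop : Measurable fun s : ℝ => (s, x + k))
        rw [lintegral_add_left hm,
          lintegral_const_mul' _ _ (by simp), lintegral_lintegral_swap]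
        exact (hγ'.comp (by fun_prop :
          Measurable fun z : ℝ × ℝ => (z.1, x + z.2 • k))).aemeasurable

lemma time_bound (T : ℝ) (w : ℝ → E3 → ℝ) (hw : Sm w) (x : E3) (t : ℝ)
    (ht : t ∈ Set.Ioc 0 T) :
    ENNReal.ofReal T * ‖w t x‖ₑ ≤
      ∫⁻ s in Set.Ioc 0 T, (‖w s x‖ₑ + ENNReal.ofReal T * ‖dt w s x‖ₑ) := by
  set D := ∫⁻ s in Set.Ioc 0 T, ‖dt w s x‖ₑ with hD
  have hcont : Continuous (fun s => dt w s x) :=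
    (Sm_dt w hw).continuous.comp (by fun_prop : Continuous fun s : ℝ => (s, x))
  have hcw : Continuous (fun s => w s x) :=
    hw.continuous.comp (by fun_prop : Continuous fun s : ℝ => (s, x))
  have h1 : ∀ s ∈ Set.Ioc 0 T, ‖w t x‖ₑ ≤ ‖w s x‖ₑ + D := fun s hs => by
    have hI := intervalIntegral.integral_eq_sub_of_hasDerivAt (a := s) (b := t)
      (f := fun s => w s x) (f' := fun s => dt w s x)
      (fun τ _ => by simpa [dt_eq w hw] using hasDerivAt_t w hw τ x) (hcont.intervalIntegrable _ _)
    have h2 : w t x = w s x + ∫ τ in s..t, dt w τ x := by rw [hI]; ring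
    rw [h2]
    refine (enorm_add_le _ _).trans ?_
    gcongr
    have h3 : ‖∫ τ in s..t, dt w τ x‖ₑ = ‖∫ τ in Set.uIoc s t, dt w τ x‖ₑ := by
      rw [← ofReal_norm, ← ofReal_norm, intervalIntegral.norm_intervalIntegral_eq]
    rw [h3]
    refine (enorm_integral_le_lintegral_enorm _).trans (lintegral_mono_set ?_)
    intro τ hτ
    rw [Set.mem_uIoc] at hτ
    rcases hτ with hτ | hτ
    · exact ⟨hs.1.trans hτ.1, hτ.2.trans ht.2⟩
    · exact ⟨ht.1.trans hτ.1, hτ.2.trans hs.2⟩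
  calc _ = ∫⁻ s in Set.Ioc 0 T, ‖w t x‖ₑ := by simp [mul_comm]
    _ ≤ ∫⁻ s in Set.Ioc 0 T, (‖w s x‖ₑ + D) := setLIntegral_mono' measurableSet_Ioc h1
    _ = _ := by
      rw [lintegral_add_left hcw.measurable.enorm, lintegral_add_left hcw.measurable.enorm,
        lintegral_const_mul' _ _ (by simp)]
      simp [hD, mul_comm]

/-- majorant for the first factor -/
def Mw (T : ℝ) (w : ℝ → E3 → ℝ) (q : ℝ × E3) : ℝ≥0∞ :=
  (‖w q.1 q.2‖ₑ + ENNReal.ofReal T * ‖dt w q.1 q.2‖ₑ) +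
  ((∑ j : Fin 3, ‖Dx (w q.1) j q.2‖ₑ) +
    ENNReal.ofReal T * ∑ j : Fin 3, ‖dt (fun s y => Dx (w s) j y) q.1 q.2‖ₑ)

/-- majorant for the second factor -/
def Mz (z : ℝ → E3 → ℝ) (q : ℝ × E3) : ℝ≥0∞ :=
  ‖z q.1 q.2‖ₑ + ∑ j : Fin 3, ‖Dx (z q.1) j q.2‖ₑ

lemma half_pow (a b c : ℝ≥0∞) :
    (c * a ^ 2) ^ (1 / 2 : ℝ) * (c * b ^ 2) ^ (1 / 2 : ℝ) = c * a * b := by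
  have h : ∀ x : ℝ≥0∞, (x ^ 2) ^ (1 / 2 : ℝ) = x := fun x => by
    rw [← ENNReal.rpow_two, ← ENNReal.rpow_mul]; norm_num
  rw [← ENNReal.mul_rpow_of_nonneg _ _ (by norm_num)]
  rw [← h (c * a * b)]
  congr 1; ring

lemma A_bound (p : ℝ) (hp : 1 < p) (μt : Measure ℝ) [SFinite μt] (hμ : μt Set.univ ≠ ⊤)
    (ν : Measure E3) [SFinite ν]
    (φ γ : ℝ → E3 → ℝ≥0∞) (mφ : Measurable (fun q : ℝ × E3 => φ q.1 q.2))
    (mγ : Measurable (fun q : ℝ × E3 => γ q.1 q.2)) :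
    ∫⁻ x, (∫⁻ s, φ s x ∂μt) ^ p + (∫⁻ s, γ s x ∂μt) ^ p ∂ν ≤
      (μt Set.univ) ^ (p - 1) * 2 * ∫⁻ q, (φ q.1 q.2 + γ q.1 q.2) ^ p ∂(μt.prod ν) := by
  have hp0 : 0 < p := by linarith
  rw [lintegral_prod_symm _ (by fun_prop), ← lintegral_const_mul' _ _ (ENNReal.mul_ne_top
          (ENNReal.rpow_ne_top_of_nonneg (by linarith) hμ) (by simp))]
  refine lintegral_mono fun x => ?_
  have m1 : Measurable (fun s => φ s x) := mφ.comp (by fun_prop : Measurable fun s : ℝ => (s, x))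
  have m2 : Measurable (fun s => γ s x) := mγ.comp (by fun_prop : Measurable fun s : ℝ => (s, x))
  have j1 := jensen μt p hp (fun s => φ s x) m1.aemeasurable
  have j2 := jensen μt p hp (fun s => γ s x) m2.aemeasurable
  have k1 : ∫⁻ s, φ s x ^ p ∂μt ≤ ∫⁻ s, (φ s x + γ s x) ^ p ∂μt :=
    lintegral_mono fun s => ENNReal.rpow_le_rpow le_self_add hp0.le
  have k2 : ∫⁻ s, γ s x ^ p ∂μt ≤ ∫⁻ s, (φ s x + γ s x) ^ p ∂μt :=
    lintegral_mono fun s => ENNReal.rpow_le_rpow le_add_self hp0.le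
  refine (add_le_add (j1.trans (mul_le_mul' le_rfl k1))
    (j2.trans (mul_le_mul' le_rfl k2))).trans (le_of_eq ?_)
  rw [← two_mul, ← mul_assoc, mul_comm 2]

set_option maxHeartbeats 400000 in
lemma core (T : ℝ) (hT : 0 < T) (p : ℝ) (hp : 5 / 2 < p) (Ω : Set E3) (hS : Sob p Ω) :
    ∃ C : ℝ≥0∞, C ≠ ⊤ ∧ ∀ w z : ℝ → E3 → ℝ, Sm w → Sm z →
      ∫⁻ q, (‖w q.1 q.2‖ₑ * ‖z q.1 q.2‖ₑ) ^ p ∂(μT T Ω) ≤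
        C * (∫⁻ q, Mw T w q ^ p ∂(μT T Ω)) * (∫⁻ q, Mz z q ^ p ∂(μT T Ω)) := by
  obtain ⟨C, hC, hSob⟩ := hS
  set κ := ENNReal.ofReal T with hκ
  have hκt : κ ≠ ⊤ := by simp [hκ]
  have hκ0 : κ ≠ 0 := by simp [hκ, hT]
  have hp0 : 0 < p := by linarith
  have hκp0 : κ ^ p ≠ 0 := by simp [ENNReal.rpow_eq_zero_iff, hκt, hκ0]
  have hκpt : κ ^ p ≠ ⊤ := ENNReal.rpow_ne_top_of_nonneg hp0.le hκt
  refine ⟨(κ ^ p)⁻¹ * (C * (κ ^ (p - 1) * 2) * 2), ?_, fun w z hw hz => ?_⟩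
  · refine ENNReal.mul_ne_top (ENNReal.inv_ne_top.2 hκp0) (ENNReal.mul_ne_top
      (ENNReal.mul_ne_top hC (ENNReal.mul_ne_top ?_ (by simp))) (by simp))
    exact ENNReal.rpow_ne_top_of_nonneg (by linarith) hκt
  have mw := Sm_meas w hw
  have mz := Sm_meas z hz
  have mdw := Sm_meas _ (Sm_dt w hw)
  have mDw := fun j => Sm_meas _ (Sm_Dx w hw j)
  have mDz := fun j => Sm_meas _ (Sm_Dx z hz j)
  have mdDw := fun j => Sm_meas _ (Sm_dt _ (Sm_Dx w hw j))
  set μt := (volume.restrict (Set.Ioc (0 : ℝ) T)) with hμt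
  set φ : ℝ → E3 → ℝ≥0∞ := fun s x => ‖w s x‖ₑ + κ * ‖dt w s x‖ₑ with hφ
  set γ : ℝ → E3 → ℝ≥0∞ := fun s x => (∑ j : Fin 3, ‖Dx (w s) j x‖ₑ) +
    κ * ∑ j : Fin 3, ‖dt (fun s y => Dx (w s) j y) s x‖ₑ with hγ
  have mφ : Measurable (fun q : ℝ × E3 => φ q.1 q.2) := by
    simp only [hφ]; fun_prop
  have mγ : Measurable (fun q : ℝ × E3 => γ q.1 q.2) := by
    simp only [hγ]; fun_prop
  have hUG : ∀ s, UG (φ s) (γ s) := fun s => by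
    have h1 := UG_smooth _ (Sm_slice w hw s)
    have h2 := (UG_smooth _ (Sm_slice _ (Sm_dt w hw) s)).const_mul κ hκt
    simp only [Dx_dt w hw] at h2
    refine h1.add h2 ?_
    exact Finset.measurable_fun_sum _ fun j _ =>
      (mDw j).comp (by fun_prop : Measurable fun x : E3 => (s, x))
  set F : E3 → ℝ≥0∞ := fun x => ∫⁻ s, φ s x ∂μt with hF
  set G : E3 → ℝ≥0∞ := fun x => ∫⁻ s, γ s x ∂μt with hG
  have hFm : Measurable F := Measurable.lintegral_prod_left' mφ
  have hGm : Measurable G := Measurable.lintegral_prod_left' mγ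
  have hFG : UG F G := UG_int μt φ γ mφ mγ hUG
  have hFS := hSob F G hFm hGm hFG
  have hμu : μt Set.univ = κ := by simp [hμt, hκ]
  have mMw : Measurable (Mw T w) := by
    have : Mw T w = fun q : ℝ × E3 => φ q.1 q.2 + γ q.1 q.2 := rfl
    rw [this]; fun_prop
  have mMz : Measurable (Mz z) := by
    unfold Mz; fun_prop
  -- bound of `A`
  have hA : ∫⁻ x in Ω, F x ^ p + G x ^ p ≤ κ ^ (p - 1) * 2 * ∫⁻ q, Mw T w q ^ p ∂(μT T Ω) := by
    have h := A_bound p (by linarith) μt (by rw [hμu]; exact hκt) (volume.restrict Ω) φ γ mφ mγ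
    rw [hμu] at h
    exact h
  set A := ∫⁻ x in Ω, F x ^ p + G x ^ p with hAd
  set Bt : ℝ → ℝ≥0∞ := fun t => ∫⁻ x in Ω, ‖z t x‖ₑ ^ p + (∑ j : Fin 3, ‖Dx (z t) j x‖ₑ) ^ p
    with hBt
  have hBS : ∀ t, ∫⁻ x in Ω, ‖z t x‖ₑ ^ (2 * p) ≤ C * Bt t ^ 2 := fun t => by
    refine hSob _ _ ?_ ?_ (UG_smooth _ (Sm_slice z hz t))
    · exact mz.comp (by fun_prop : Measurable fun x : E3 => (t, x))
    · exact Finset.measurable_fun_sum _ fun j _ =>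
        (mDz j).comp (by fun_prop : Measurable fun x : E3 => (t, x))
  have hB : ∫⁻ t, Bt t ∂μt ≤ 2 * ∫⁻ q, Mz z q ^ p ∂(μT T Ω) := by
    rw [μT, lintegral_prod _ (by fun_prop), ← lintegral_const_mul' _ _ (by simp)]
    refine lintegral_mono fun t => ?_
    rw [← lintegral_const_mul' _ _ (by simp)]
    refine lintegral_mono fun x => ?_
    rw [two_mul]
    exact add_le_add (ENNReal.rpow_le_rpow le_self_add hp0.le)
      (ENNReal.rpow_le_rpow le_add_self hp0.le)
  have hsl : ∀ t ∈ Set.Ioc 0 T, κ ^ p * ∫⁻ x in Ω, (‖w t x‖ₑ * ‖z t x‖ₑ) ^ p ≤ C * A * Bt t := by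
    intro t ht
    have mzt : Measurable (fun x => ‖z t x‖ₑ) := mz.comp (by fun_prop : Measurable fun x : E3 => (t, x))
    have e2 : ∀ a : ℝ≥0∞, (a ^ p) ^ (2 : ℝ) = a ^ (2 * p) := fun a => by
      rw [← ENNReal.rpow_mul, mul_comm]
    calc _ = ∫⁻ x in Ω, κ ^ p * (‖w t x‖ₑ * ‖z t x‖ₑ) ^ p := by
          rw [lintegral_const_mul' _ _ hκpt]
      _ ≤ ∫⁻ x in Ω, F x ^ p * ‖z t x‖ₑ ^ p := by
          refine lintegral_mono fun x => ?_
          simp only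
          rw [← ENNReal.mul_rpow_of_nonneg _ _ hp0.le, ← ENNReal.mul_rpow_of_nonneg _ _ hp0.le,
            ← mul_assoc]
          gcongr
          exact time_bound T w hw x t ht
      _ ≤ (∫⁻ x in Ω, (F x ^ p) ^ (2 : ℝ)) ^ (1 / 2 : ℝ) *
            (∫⁻ x in Ω, (‖z t x‖ₑ ^ p) ^ (2 : ℝ)) ^ (1 / 2 : ℝ) :=
          ENNReal.lintegral_mul_le_Lp_mul_Lq _ Real.HolderConjugate.two_two
            (by fun_prop) (mzt.pow_const p).aemeasurable
      _ ≤ (C * A ^ 2) ^ (1 / 2 : ℝ) * (C * Bt t ^ 2) ^ (1 / 2 : ℝ) := by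
          simp only [e2]
          gcongr
          exact hBS t
      _ = _ := half_pow _ _ _
  have mBt : Measurable Bt := by
    apply Measurable.lintegral_prod_right'
      (f := fun q : ℝ × E3 => ‖z q.1 q.2‖ₑ ^ p + (∑ j : Fin 3, ‖Dx (z q.1) j q.2‖ₑ) ^ p)
    fun_prop
  have hfin : κ ^ p * ∫⁻ q, (‖w q.1 q.2‖ₑ * ‖z q.1 q.2‖ₑ) ^ p ∂(μT T Ω) ≤
      (C * (κ ^ (p - 1) * 2) * 2) * (∫⁻ q, Mw T w q ^ p ∂(μT T Ω)) *
        (∫⁻ q, Mz z q ^ p ∂(μT T Ω)) := by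
    calc _ = ∫⁻ t, (κ ^ p * ∫⁻ x in Ω, (‖w t x‖ₑ * ‖z t x‖ₑ) ^ p) ∂μt := by
          rw [lintegral_const_mul' _ _ hκpt, μT, lintegral_prod _ (by fun_prop)]
      _ ≤ ∫⁻ t, C * A * Bt t ∂μt := setLIntegral_mono' measurableSet_Ioc hsl
      _ = C * A * ∫⁻ t, Bt t ∂μt := lintegral_const_mul _ mBt
      _ ≤ C * (κ ^ (p - 1) * 2 * ∫⁻ q, Mw T w q ^ p ∂(μT T Ω)) *
            (2 * ∫⁻ q, Mz z q ^ p ∂(μT T Ω)) := by gcongr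
      _ = _ := by ring
  calc _ = (κ ^ p)⁻¹ * (κ ^ p * ∫⁻ q, (‖w q.1 q.2‖ₑ * ‖z q.1 q.2‖ₑ) ^ p ∂(μT T Ω)) := by
        rw [← mul_assoc, ENNReal.inv_mul_cancel hκp0 hκpt, one_mul]
    _ ≤ _ := mul_le_mul' le_rfl hfin
    _ = _ := by ring

/-- the `L^p` norm of an `ℝ≥0∞`-valued function -/
def LL (p : ℝ) (μ : Measure (ℝ × E3)) (f : ℝ × E3 → ℝ≥0∞) : ℝ≥0∞ := (∫⁻ q, f q ^ p ∂μ) ^ (1 / p)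

lemma LL_add (p : ℝ) (hp : 1 ≤ p) (μ : Measure (ℝ × E3)) (f g : ℝ × E3 → ℝ≥0∞)
    (hf : Measurable f) (hg : Measurable g) :
    LL p μ (fun q => f q + g q) ≤ LL p μ f + LL p μ g :=
  ENNReal.lintegral_Lp_add_le hf.aemeasurable hg.aemeasurable hp

lemma LL_sum (p : ℝ) (hp : 1 ≤ p) (μ : Measure (ℝ × E3)) (f : Fin 3 → ℝ × E3 → ℝ≥0∞)
    (hf : ∀ i, Measurable (f i)) :
    LL p μ (fun q => ∑ i, f i q) ≤ ∑ i, LL p μ (f i) := by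
  simp only [Fin.sum_univ_three]
  have := hf 0
  have := hf 1
  have := hf 2
  refine (LL_add p hp μ (fun q => f 0 q + f 1 q) (f 2) (by fun_prop) (by fun_prop)).trans ?_
  gcongr
  exact LL_add p hp μ _ _ (by fun_prop) (by fun_prop)

lemma LL_const (p : ℝ) (hp : 1 ≤ p) (μ : Measure (ℝ × E3)) (f : ℝ × E3 → ℝ≥0∞)
    (c : ℝ≥0∞) (hc : c ≠ ⊤) : LL p μ (fun q => c * f q) = c * LL p μ f := by
  have hp0 : 0 < p := by linarith
  unfold LL
  simp only [ENNReal.mul_rpow_of_nonneg _ _ hp0.le]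
  rw [lintegral_const_mul' _ _ (ENNReal.rpow_ne_top_of_nonneg hp0.le hc),
    ENNReal.mul_rpow_of_nonneg _ _ (by positivity), ← ENNReal.rpow_mul, mul_one_div_cancel hp0.ne',
    ENNReal.rpow_one]

lemma LL_eLp (p : ℝ) (hp : 1 ≤ p) (μ : Measure (ℝ × E3)) (f : ℝ × E3 → ℝ) :
    eLpNorm f (ENNReal.ofReal p) μ = LL p μ (fun q => ‖f q‖ₑ) := by
  have hp0 : 0 < p := by linarith
  rw [eLpNorm_eq_lintegral_rpow_enorm_toReal (by simp [hp0]) (by simp),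
    ENNReal.toReal_ofReal hp0.le, LL]

lemma Mz_bound (p : ℝ) (hp : 1 ≤ p) (μ : Measure (ℝ × E3)) (u : ℝ → E3 → ℝ) (hu : Sm u)
    (i : Fin 3) :
    LL p μ (Mz (dt (fun s y => Dx (u s) i y))) ≤ XnormE (ENNReal.ofReal p) μ u := by
  have hw := Sm_Dx u hu i
  set w : ℝ → E3 → ℝ := fun s y => Dx (u s) i y with hwd
  have m1 := Sm_meas _ (Sm_dt w hw)
  have m2 := fun j => Sm_meas _ (Sm_dt _ (Sm_Dx w hw j))
  unfold Mz
  simp only [Dx_dt w hw]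
  refine (LL_add p hp μ _ _ m1 (by fun_prop)).trans ?_
  refine (add_le_add le_rfl (LL_sum p hp μ _ m2)).trans ?_
  unfold XnormE
  simp only [LL_eLp p hp]
  refine add_le_add (le_add_left ?_) ?_
  · exact Finset.single_le_sum (f := fun i => LL p μ fun q =>
      ‖dt (fun s y => Dx (u s) i y) q.1 q.2‖ₑ) (fun _ _ => zero_le) (Finset.mem_univ i)
  · exact Finset.single_le_sum (f := fun i => ∑ j : Fin 3, LL p μ fun q =>
      ‖dt (fun s y => DDx (u s) i j y) q.1 q.2‖ₑ) (fun _ _ => zero_le) (Finset.mem_univ i)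

lemma Mw_bound (T : ℝ) (p : ℝ) (hp : 1 ≤ p) (μ : Measure (ℝ × E3)) (u : ℝ → E3 → ℝ) (hu : Sm u)
    (i : Fin 3) :
    LL p μ (Mw T (fun s y => Dx (u s) i y)) ≤
      (1 + ENNReal.ofReal T) * XnormE (ENNReal.ofReal p) μ u := by
  have hw := Sm_Dx u hu i
  set w : ℝ → E3 → ℝ := fun s y => Dx (u s) i y with hwd
  have m0 := Sm_meas _ hw
  have m1 := Sm_meas _ (Sm_dt w hw)
  have m2 := fun j => Sm_meas _ (Sm_dt _ (Sm_Dx w hw j))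
  have m3 := fun j => Sm_meas _ (Sm_Dx w hw j)
  set κ := ENNReal.ofReal T with hκ
  have hκt : κ ≠ ⊤ := by simp [hκ]
  set X := XnormE (ENNReal.ofReal p) μ u with hX
  have hX0 : X = XnormE (ENNReal.ofReal p) μ u := rfl
  unfold XnormE at hX0
  simp only [LL_eLp p hp] at hX0
  have b1 : LL p μ (fun q => ‖w q.1 q.2‖ₑ) + ∑ j : Fin 3, LL p μ (fun q => ‖Dx (w q.1) j q.2‖ₑ)
      ≤ X := by
    rw [hX0]
    refine le_add_right (le_add_right (le_add_right (add_le_add (le_add_left ?_) ?_)))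
    · exact Finset.single_le_sum (f := fun i => LL p μ fun q =>
        ‖Dx (u q.1) i q.2‖ₑ) (fun _ _ => zero_le) (Finset.mem_univ i)
    · exact Finset.single_le_sum (f := fun i => ∑ j : Fin 3, LL p μ fun q =>
        ‖DDx (u q.1) i j q.2‖ₑ) (fun _ _ => zero_le) (Finset.mem_univ i)
  have b2 : LL p μ (fun q => ‖dt w q.1 q.2‖ₑ) +
      ∑ j : Fin 3, LL p μ (fun q => ‖dt (fun s y => Dx (w s) j y) q.1 q.2‖ₑ) ≤ X := by
    rw [hX0]
    refine add_le_add (le_add_left ?_) ?_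
    · exact Finset.single_le_sum (f := fun i => LL p μ fun q =>
        ‖dt (fun s y => Dx (u s) i y) q.1 q.2‖ₑ) (fun _ _ => zero_le) (Finset.mem_univ i)
    · exact Finset.single_le_sum (f := fun i => ∑ j : Fin 3, LL p μ fun q =>
        ‖dt (fun s y => DDx (u s) i j y) q.1 q.2‖ₑ) (fun _ _ => zero_le) (Finset.mem_univ i)
  have c1 : LL p μ (Mw T w) ≤ (LL p μ (fun q => ‖w q.1 q.2‖ₑ) +
      κ * LL p μ (fun q => ‖dt w q.1 q.2‖ₑ)) +
      (∑ j : Fin 3, LL p μ (fun q => ‖Dx (w q.1) j q.2‖ₑ) +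
      κ * ∑ j : Fin 3, LL p μ (fun q => ‖dt (fun s y => Dx (w s) j y) q.1 q.2‖ₑ)) := by
    refine (LL_add p hp μ _ _ (by fun_prop) (by fun_prop)).trans (add_le_add ?_ ?_)
    · refine (LL_add p hp μ _ _ (by fun_prop) (by fun_prop)).trans (add_le_add le_rfl ?_)
      rw [LL_const p hp μ _ _ hκt]
    · refine (LL_add p hp μ _ _ (by fun_prop) (by fun_prop)).trans (add_le_add ?_ ?_)
      · exact LL_sum p hp μ _ m3
      · rw [LL_const p hp μ _ _ hκt]
        gcongr
        exact LL_sum p hp μ _ m2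
  refine c1.trans ?_
  calc _ = (LL p μ (fun q => ‖w q.1 q.2‖ₑ) + ∑ j : Fin 3, LL p μ (fun q => ‖Dx (w q.1) j q.2‖ₑ)) +
        κ * (LL p μ (fun q => ‖dt w q.1 q.2‖ₑ) +
      ∑ j : Fin 3, LL p μ (fun q => ‖dt (fun s y => Dx (w s) j y) q.1 q.2‖ₑ)) := by ring
    _ ≤ X + κ * X := by gcongr
    _ = _ := by ring

/-- For `p ∈ (5/2, 3)`, `T > 0` and `Ω` the whole space, a half-space or a
bounded `C^{1,1}` domain, there is `c` such that for all purely periodic `u, v` in the solution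
space `X`: `‖∇v · ∂ₜ∇u‖_{L^p(𝕋×Ω)} ≤ c‖v‖_X ‖u‖_X`. -/
theorem stmt17 (T : ℝ) (hT : 0 < T) (p : ℝ) (hp1 : 5 / 2 < p) (hp2 : p < 3) (Ω : Set E3)
    (hΩ : Ω = Set.univ ∨ Ω = {x : E3 | 0 < x 2} ∨ IsC11Domain Ω) :
    ∃ c : ℝ≥0∞, c ≠ ⊤ ∧
      ∀ u v : ℝ → E3 → ℝ,
        ContDiff ℝ (⊤ : ℕ∞) (Function.uncurry u) →
        ContDiff ℝ (⊤ : ℕ∞) (Function.uncurry v) →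
        (∀ t x, u (t + T) x = u t x) → (∀ t x, v (t + T) x = v t x) →
        (∀ x, (∫ s in (0 : ℝ)..T, u s x) = 0) → (∀ x, (∫ s in (0 : ℝ)..T, v s x) = 0) →
        eLpNorm (fun z : ℝ × E3 =>
              ∑ i : Fin 3, Dx (v z.1) i z.2 * dt (fun s y => Dx (u s) i y) z.1 z.2)
            (ENNReal.ofReal p) (μT T Ω) ≤
          c * XnormE (ENNReal.ofReal p) (μT T Ω) v * XnormE (ENNReal.ofReal p) (μT T Ω) u := by
  obtain ⟨C, hC, hcore⟩ := core T hT p hp1 Ω (sob_of_dom p hp1 Ω hΩ)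
  have hp0 : 0 < p := by linarith
  have hp1' : 1 ≤ p := by linarith
  refine ⟨3 * (C ^ (1 / p) * (1 + ENNReal.ofReal T)), ?_, fun u v hu hv _ _ _ _ => ?_⟩
  · refine ENNReal.mul_ne_top (by simp) (ENNReal.mul_ne_top ?_ (by simp))
    exact ENNReal.rpow_ne_top_of_nonneg (by positivity) hC
  set μ := μT T Ω with hμ
  set X := XnormE (ENNReal.ofReal p) μ v with hX
  set Y := XnormE (ENNReal.ofReal p) μ u with hY
  have mv := fun i => Sm_meas _ (Sm_Dx v hv i)
  have mu := fun i => Sm_meas _ (Sm_dt _ (Sm_Dx u hu i))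
  have hi : ∀ i : Fin 3, LL p μ (fun q => ‖Dx (v q.1) i q.2‖ₑ *
      ‖dt (fun s y => Dx (u s) i y) q.1 q.2‖ₑ) ≤ C ^ (1 / p) * (1 + ENNReal.ofReal T) * X * Y := by
    intro i
    have h := ENNReal.rpow_le_rpow (hcore _ _ (Sm_Dx v hv i) (Sm_dt _ (Sm_Dx u hu i)))
      (by positivity : 0 ≤ 1 / p)
    rw [ENNReal.mul_rpow_of_nonneg _ _ (by positivity),
      ENNReal.mul_rpow_of_nonneg _ _ (by positivity)] at h
    refine h.trans ?_
    calc _ ≤ C ^ (1 / p) * ((1 + ENNReal.ofReal T) * X) * Y :=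
          mul_le_mul' (mul_le_mul' le_rfl (Mw_bound T p hp1' μ v hv i)) (Mz_bound p hp1' μ u hu i)
      _ = _ := by ring
  rw [LL_eLp p hp1']
  calc _ ≤ LL p μ (fun q => ∑ i : Fin 3, ‖Dx (v q.1) i q.2‖ₑ *
          ‖dt (fun s y => Dx (u s) i y) q.1 q.2‖ₑ) := by
        unfold LL
        gcongr with q
        refine (enorm_sum_le _ _).trans (le_of_eq ?_)
        simp only [enorm_mul]
    _ ≤ ∑ i : Fin 3, LL p μ (fun q => ‖Dx (v q.1) i q.2‖ₑ *
          ‖dt (fun s y => Dx (u s) i y) q.1 q.2‖ₑ) :=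
        LL_sum p hp1' μ _ fun i => (mv i).mul (mu i)
    _ ≤ ∑ i : Fin 3, C ^ (1 / p) * (1 + ENNReal.ofReal T) * X * Y :=
        Finset.sum_le_sum fun i _ => hi i
    _ = _ := by simp; ring
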